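/- Every non-abelian right angled Artin group G(Γ) admits a surjective homomorphism onto the free group F₂ of rank 2. Consequently, for every proper word w, the set w[G(Γ)] is not rational in G(Γ). -/

import Mathlib

open Pointwise

/-- The verbal set `w[G]`: all values of the word `w` in `G`. -/
def verbalSet (w : FreeGroup ℕ) (G : Type*) [Group G] : Set G :=
  {g | ∃ φ : FreeGroup ℕ →* G, φ w = g}

/-- Exponent sums of a word in the generators, as a finitely supported function. -/
noncomputable def expSum (w : FreeGroup ℕ) : ℕ →₀ ℤ :=
  Multiplicative.toAdd
    ((FreeGroup.lift fun i => Multiplicative.ofAdd (Finsupp.single i (1 : ℤ))) w)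

/-- `e(w)`: the gcd of the exponent sums of the generators in `w` (0 if all are 0). -/
noncomputable def eWord (w : FreeGroup ℕ) : ℕ :=
  (expSum w).support.gcd fun i => ((expSum w) i).natAbs

/-- A word is proper if `w[G] ≠ {1}` and `w[H] ≠ H` for some groups `G`, `H`. -/
def IsProperWord (w : FreeGroup ℕ) : Prop :=
  ∃ (G : Type) (_ : Group G) (H : Type) (_ : Group H),
    verbalSet w G ≠ {1} ∧ verbalSet w H ≠ Set.univ

/-- Rational subsets of a monoid: the smallest family containing the finite sets and
closed under union, product and submonoid generation (Kleene star). -/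
inductive IsRational {M : Type*} [Monoid M] : Set M → Prop
  | finite (s : Set M) (h : s.Finite) : IsRational s
  | union {s t : Set M} : IsRational s → IsRational t → IsRational (s ∪ t)
  | mul {s t : Set M} : IsRational s → IsRational t → IsRational (s * t)
  | star {s : Set M} : IsRational s → IsRational (Submonoid.closure s : Set M)
/-- The defining relations of the right angled Artin group on a graph `Γ`. -/
def raagRels {V : Type*} (Γ : SimpleGraph V) : Set (FreeGroup V) :=
  {r | ∃ u v : V, Γ.Adj u v ∧
    r = FreeGroup.of u * FreeGroup.of v * (FreeGroup.of u)⁻¹ * (FreeGroup.of v)⁻¹}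

/-- The right angled Artin group on a finite graph `Γ`. -/
def RAAG {V : Type*} (Γ : SimpleGraph V) : Type _ := PresentedGroup (raagRels Γ)

instance {V : Type*} (Γ : SimpleGraph V) : Group (RAAG Γ) := by
  unfold RAAG; infer_instance

/-!
It suffices to treat the free group `F` on `x`, `y`: rational sets and verbal sets are carried to
rational sets and verbal sets by surjective homomorphisms, and two non-adjacent vertices of `Γ`
span a retract of `G(Γ)` which is free of rank two.

Let `ρⱼ(g)` be the number of occurrences of `x yʲ x` in the reduced word of `g` minus the number of
occurrences in that of `g⁻¹`, read modulo `e(w)`. Up to an error in boundedly many coordinates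
`ρ : F → ⨁ⱼ ℤ/e(w)` is a homomorphism (Rhemtulla's argument for the infinite width of verbal
subgroups). Since the exponent sums of `w` vanish modulo `e(w)`, the number of non-zero coordinates
of `ρ` is bounded on `w[F]`.

A rational subset of `F` can be pumped along geodesics. If it is invariant under conjugation and
contains a non-trivial element, it contains an element with reduced word `P T P⁻¹`, where
`P = x yⁿ x yⁿ x ⋯ yⁿ x` is as long as we please. Pumping the powers of `y` in the prefix `P`, but
not those in `P⁻¹`, makes the exponents pairwise distinct and avoids the coordinates in which `ρ`
is non-zero on `T P⁻¹`, so the number of non-zero coordinates of `ρ` becomes arbitrarily large.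
As `e(w) ≠ 1`, this is a contradiction.
-/

section Verbal

variable {G H : Type*} [Group G] [Group H] {w : FreeGroup ℕ}

theorem IsRational.image {M N : Type*} [Monoid M] [Monoid N] (f : M →* N) {s : Set M}
    (hs : IsRational s) : IsRational (f '' s) := by
  induction hs with
  | finite s h => exact .finite _ (h.image f)
  | union _ _ ihs iht => rw [Set.image_union]; exact ihs.union iht
  | mul _ _ ihs iht => rw [Set.image_mul]; exact ihs.mul iht
  | star _ ih =>
    rw [← Submonoid.coe_map, MonoidHom.map_mclosure]
    exact ih.star

theorem image_verbalSet (f : G →* H) (hf : Function.Surjective f) (w : FreeGroup ℕ) :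
    f '' verbalSet w G = verbalSet w H := by
  ext h
  constructor
  · rintro ⟨_, ⟨φ, rfl⟩, rfl⟩
    exact ⟨f.comp φ, rfl⟩
  · rintro ⟨ψ, rfl⟩
    choose g hg using hf
    have hψ : f.comp (FreeGroup.lift fun i => g (ψ (.of i))) = ψ := by
      ext i
      simp [hg]
    exact ⟨_, ⟨_, rfl⟩, DFunLike.congr_fun hψ w⟩

theorem conj_mem_verbalSet {g : G} (hg : g ∈ verbalSet w G) (c : G) :
    c * g * c⁻¹ ∈ verbalSet w G := by
  obtain ⟨φ, rfl⟩ := hg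
  exact ⟨(MulAut.conj c).toMonoidHom.comp φ, by simp⟩

theorem verbalSet_one : verbalSet 1 G = {1} :=
  Set.eq_singleton_iff_unique_mem.mpr ⟨⟨1, map_one _⟩, by rintro _ ⟨φ, rfl⟩; exact map_one φ⟩

theorem IsProperWord.ne_one (hw : IsProperWord w) : w ≠ 1 := by
  rintro rfl
  obtain ⟨G, _, -, -, hG, -⟩ := hw
  exact hG verbalSet_one

end Verbal

section ExponentSums

variable {w : FreeGroup ℕ}

theorem expSum_one : expSum 1 = 0 := by simp [expSum]

theorem expSum_of (i : ℕ) : expSum (.of i) = Finsupp.single i 1 := by simp [expSum]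

theorem expSum_inv (w : FreeGroup ℕ) : expSum w⁻¹ = -expSum w := by simp [expSum]

theorem expSum_mul (v w : FreeGroup ℕ) : expSum (v * w) = expSum v + expSum w := by simp [expSum]

theorem eWord_dvd_expSum (w : FreeGroup ℕ) (i : ℕ) : (eWord w : ℤ) ∣ expSum w i := by
  by_cases hi : i ∈ (expSum w).support
  · exact Int.natCast_dvd.mpr (Finset.gcd_dvd hi)
  · simp [Finsupp.notMem_support_iff.mp hi]

theorem expSum_sum_smul_eq_zero {A : Type*} [AddCommGroup A] [Module (ZMod (eWord w)) A]
    (f : ℕ → A) : ((expSum w).sum fun i n => n • f i) = 0 := by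
  refine Finset.sum_eq_zero fun i _ => ?_
  have hi : ((expSum w i : ℤ) : ZMod (eWord w)) = 0 :=
    (ZMod.intCast_zmod_eq_zero_iff_dvd _ _).mpr (eWord_dvd_expSum w i)
  exact (Int.cast_smul_eq_zsmul (ZMod (eWord w)) _ _).symm.trans (by rw [hi, zero_smul])

theorem exists_sum_expSum_mul_eq_one (hw : eWord w = 1) :
    ∃ c : ℕ → ℤ, ((expSum w).sum fun i n => n • c i) = 1 := by
  obtain ⟨c, hc⟩ := (expSum w).support.gcd_eq_sum_mul (expSum w)
  have hdvd : (expSum w).support.gcd (expSum w) ∣ 1 := by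
    rw [← Int.natAbs_dvd_natAbs, Int.natAbs_one, ← hw]
    exact Finset.dvd_gcd fun i hi => Int.natAbs_dvd_natAbs.mpr (Finset.gcd_dvd hi)
  refine ⟨c, ?_⟩
  rw [Int.eq_one_of_dvd_one (Int.nonneg_of_normalize_eq_self Finset.normalize_gcd) hdvd] at hc
  exact hc.symm

theorem verbalSet_eq_univ_of_eWord_eq_one (hw : eWord w = 1) (H : Type*) [Group H] :
    verbalSet w H = Set.univ := by
  obtain ⟨c, hc⟩ := exists_sum_expSum_mul_eq_one hw
  let χ : FreeGroup ℕ →* Multiplicative ℤ :=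
    (Finsupp.linearCombination ℤ c).toAddMonoidHom.toMultiplicative.comp
      (FreeGroup.lift fun i => Multiplicative.ofAdd (Finsupp.single i (1 : ℤ)))
  have hχ : χ w = Multiplicative.ofAdd 1 := congrArg Multiplicative.ofAdd hc
  exact Set.eq_univ_of_forall fun h => ⟨(zpowersHom H h).comp χ, by simp [hχ]⟩

theorem IsProperWord.eWord_ne_one (hw : IsProperWord w) : eWord w ≠ 1 := by
  obtain ⟨-, -, H, _, -, hH⟩ := hw
  exact fun h => hH (verbalSet_eq_univ_of_eWord_eq_one h H)

end ExponentSums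

section Pumping

open FreeGroup

variable {α : Type*}

/-- The vertex `t` of the Cayley graph of the free group lies on the geodesic from `1` to `g`.
As the graph is a tree, this means that every path from `1` to `g` visits `t`, where a path is
encoded by the word which it spells. -/
def OnGeodesic (t g : FreeGroup α) : Prop :=
  ∀ L, mk L = g → ∃ P, P <+: L ∧ mk P = t

theorem OnGeodesic.of_mul {t g h : FreeGroup α} (ht : OnGeodesic t (g * h)) :
    OnGeodesic t g ∨ OnGeodesic (g⁻¹ * t) h := by
  by_contra! hcon
  simp only [OnGeodesic, not_forall] at hcon
  obtain ⟨⟨L, rfl, hLt⟩, M, rfl, hMt⟩ := hcon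
  obtain ⟨P, hP, rfl⟩ := ht (L ++ M) mul_mk.symm
  rcases List.prefix_or_prefix_of_prefix hP (List.prefix_append L M) with hPL | ⟨Q, rfl⟩
  · exact hLt ⟨P, hPL, rfl⟩
  · exact hMt ⟨Q, (List.prefix_append_right_inj L).mp hP, by rw [← mul_mk, inv_mul_cancel_left]⟩

theorem OnGeodesic.eq_one {t : FreeGroup α} (ht : OnGeodesic t 1) : t = 1 := by
  obtain ⟨P, hP, rfl⟩ := ht [] rfl
  rw [List.prefix_nil.mp hP, one_eq_mk]

theorem onGeodesic_mk_append {A B : List (α × Bool)} (h : IsReduced (A ++ B)) :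
    OnGeodesic (mk A) (mk (A ++ B)) := by
  classical
  intro L hL
  have hred : Red L (A ++ B) := by
    rw [← h.reduce_eq, ← reduce.sound hL]
    exact reduce.red
  obtain ⟨P, Q, rfl, hP, -⟩ := Red.to_append_iff.mp hred
  exact ⟨P, List.prefix_append P Q, Red.exact.mpr ⟨A, hP, .refl⟩⟩

theorem finite_setOf_onGeodesic (g : FreeGroup α) : {t | OnGeodesic t g}.Finite := by
  classical
  refine ((List.finite_toSet g.toWord.inits).image mk).subset fun t ht => ?_
  obtain ⟨P, hP, rfl⟩ := ht g.toWord mk_toWord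
  exact ⟨P, (List.mem_inits _ _).mpr hP, rfl⟩

/-- There are finitely many sets `S` such that, for every `g ∈ R` and every `t` on the geodesic
from `1` to `g`, some translate `t • S` contains `g` and is contained in `R`. This replaces the
states of a finite automaton recognising the reduced words of the elements of `R`. -/
def HasFiniteResiduals (R : Set (FreeGroup α)) : Prop :=
  ∃ F : Set (Set (FreeGroup α)), F.Finite ∧
    ∀ g ∈ R, ∀ t, OnGeodesic t g → ∃ S ∈ F, g ∈ t • S ∧ t • S ⊆ R

namespace HasFiniteResiduals

variable {R R' : Set (FreeGroup α)}

theorem of_finite (hR : R.Finite) : HasFiniteResiduals R := by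
  refine ⟨⋃ g ∈ R, (fun t => {t⁻¹ * g}) '' {t | OnGeodesic t g},
    hR.biUnion fun g _ => (finite_setOf_onGeodesic g).image _, fun g hg t ht => ?_⟩
  exact ⟨{t⁻¹ * g}, Set.mem_biUnion hg ⟨t, ht, rfl⟩, by simp, by simpa⟩

theorem union (hR : HasFiniteResiduals R) (hR' : HasFiniteResiduals R') :
    HasFiniteResiduals (R ∪ R') := by
  obtain ⟨F, hF, hres⟩ := hR
  obtain ⟨F', hF', hres'⟩ := hR'
  refine ⟨F ∪ F', hF.union hF', ?_⟩
  rintro g (hg | hg) t ht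
  · obtain ⟨S, hS, hgS, hSR⟩ := hres g hg t ht
    exact ⟨S, .inl hS, hgS, hSR.trans Set.subset_union_left⟩
  · obtain ⟨S, hS, hgS, hSR⟩ := hres' g hg t ht
    exact ⟨S, .inr hS, hgS, hSR.trans Set.subset_union_right⟩

theorem mul (hR : HasFiniteResiduals R) (hR' : HasFiniteResiduals R') :
    HasFiniteResiduals (R * R') := by
  obtain ⟨F, hF, hres⟩ := hR
  obtain ⟨F', hF', hres'⟩ := hR'
  refine ⟨(· * R') '' F ∪ F', (hF.image _).union hF', ?_⟩
  rintro _ ⟨g, hg, h, hh, rfl⟩ t ht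
  rcases ht.of_mul with ht | ht
  · obtain ⟨S, hS, hgS, hSR⟩ := hres g hg t ht
    refine ⟨S * R', .inl ⟨S, hS, rfl⟩, ?_, ?_⟩ <;> rw [← smul_mul_assoc]
    · exact Set.mul_mem_mul hgS hh
    · exact Set.mul_subset_mul_right hSR
  · obtain ⟨S, hS, hhS, hSR⟩ := hres' h hh _ ht
    have ht : t • S = g • (g⁻¹ * t) • S := by rw [smul_smul, mul_inv_cancel_left]
    refine ⟨S, .inr hS, ?_, ?_⟩ <;> rw [ht]
    · exact Set.smul_mem_smul_set hhS
    · exact (Set.smul_set_mono hSR).trans (Set.smul_set_subset_mul hg)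

theorem submonoidClosure (hR : HasFiniteResiduals R) :
    HasFiniteResiduals (Submonoid.closure R : Set (FreeGroup α)) := by
  obtain ⟨F, hF, hres⟩ := hR
  set N : Set (FreeGroup α) := ↑(Submonoid.closure R) with hN
  have hRN : R * N ⊆ N := by
    rintro _ ⟨g, hg, h, hh, rfl⟩
    exact mul_mem (Submonoid.subset_closure hg) hh
  refine ⟨insert {1} ((· * N) '' F), (hF.image _).insert _, fun g hg => ?_⟩
  induction hg using Submonoid.closure_induction_left with
  | one =>
    intro t ht
    obtain rfl := ht.eq_one
    exact ⟨{1}, .inl rfl, by simp, by simp [hN, one_mem]⟩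
  | mul_left g hg h hh ih =>
    intro t ht
    rcases ht.of_mul with ht | ht
    · obtain ⟨S, hS, hgS, hSR⟩ := hres g hg t ht
      refine ⟨S * N, .inr ⟨S, hS, rfl⟩, ?_, ?_⟩ <;> rw [← smul_mul_assoc]
      · exact Set.mul_mem_mul hgS hh
      · exact (Set.mul_subset_mul_right hSR).trans hRN
    · obtain ⟨S, hS, hhS, hSN⟩ := ih _ ht
      have ht : t • S = g • (g⁻¹ * t) • S := by rw [smul_smul, mul_inv_cancel_left]
      refine ⟨S, hS, ?_, ?_⟩ <;> rw [ht]
      · exact Set.smul_mem_smul_set hhS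
      · exact (Set.smul_set_mono hSN).trans ((Set.smul_set_subset_mul hg).trans hRN)

end HasFiniteResiduals

theorem IsRational.hasFiniteResiduals {R : Set (FreeGroup α)} (hR : IsRational R) :
    HasFiniteResiduals R := by
  induction hR with
  | finite _ h => exact .of_finite h
  | union _ _ ihs iht => exact ihs.union iht
  | mul _ _ ihs iht => exact ihs.mul iht
  | star _ ih => exact ih.submonoidClosure

theorem onGeodesic_mul_pow {A Y B : List (α × Bool)} (hY : IsCyclicallyReduced Y)
    (h : IsReduced (A ++ Y ++ B)) {i m : ℕ} (hm : m ≠ 0) (him : i ≤ m) :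
    OnGeodesic (mk A * mk Y ^ i) (mk A * mk Y ^ m * mk B) := by
  have hred := h.append_flatten_replicate_append hY hm
  obtain ⟨l, rfl⟩ := Nat.exists_eq_add_of_le him
  rw [List.replicate_add, List.flatten_append, ← List.append_assoc, List.append_assoc] at hred
  simpa [pow_add, mul_assoc] using onGeodesic_mk_append hred

theorem HasFiniteResiduals.exists_infinite_setOf_mul_pow_mem {R : Set (FreeGroup α)}
    (hR : HasFiniteResiduals R) :
    ∃ n, ∀ (A Y B : List (α × Bool)) (m : ℕ), IsCyclicallyReduced Y → IsReduced (A ++ Y ++ B) →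
      n ≤ m → mk A * mk Y ^ m * mk B ∈ R → {k | mk A * mk Y ^ k * mk B ∈ R}.Infinite := by
  obtain ⟨F, hF, hres⟩ := hR
  refine ⟨F.ncard + 1, fun A Y B m₀ hY hred hm₀ hmem hfin => ?_⟩
  obtain ⟨m, hm₀m, hm, hmax⟩ := hfin.exists_le_maximal hmem
  have hcone : ∀ i ∈ Set.Iio m, ∃ S ∈ F, mk A * mk Y ^ m * mk B ∈ (mk A * mk Y ^ i) • S ∧
      (mk A * mk Y ^ i) • S ⊆ R := fun i (hi : i < m) =>
    hres _ hm _ (onGeodesic_mul_pow hY hred (by omega) hi.le)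
  choose! S hSF hSmem hSR using hcone
  obtain ⟨i, hi, j, hj, hij, hS⟩ := Set.exists_ne_map_eq_of_ncard_lt_of_maps_to
    (s := Set.Iio m) (by rw [Set.ncard_Iio_nat]; omega) hSF hF
  wlog hlt : i < j generalizing i j
  · exact this j hj i hi hij.symm hS.symm (by omega)
  have hpump : mk A * mk Y ^ (m + (j - i)) * mk B ∈ R := by
    have hmem := hSmem i hi
    rw [Set.mem_smul_set_iff_inv_smul_mem, hS] at hmem
    convert! hSR j hj (Set.smul_mem_smul_set hmem) using 1
    obtain ⟨d, rfl⟩ := Nat.exists_eq_add_of_le hlt.le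
    rw [add_tsub_cancel_left, smul_eq_mul, smul_eq_mul]
    group
  have := hmax hpump (by omega)
  omega

end Pumping

section EqUpTo

variable {ι M : Type*} [AddCommGroup M] {m n : ℕ} {f f' g g' h : ι →₀ M}

/-- `f` and `g` differ in at most `n` coordinates. -/
def EqUpTo (n : ℕ) (f g : ι →₀ M) : Prop :=
  (f - g).support.card ≤ n

namespace EqUpTo

theorem refl (f : ι →₀ M) : EqUpTo 0 f f := by simp [EqUpTo]

theorem symm (h : EqUpTo n f g) : EqUpTo n g f := by
  rwa [EqUpTo, ← neg_sub, Finsupp.support_neg]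

theorem add (h : EqUpTo m f g) (h' : EqUpTo n f' g') : EqUpTo (m + n) (f + f') (g + g') := by
  classical
  rw [EqUpTo, add_sub_add_comm]
  exact (Finset.card_le_card Finsupp.support_add).trans
    ((Finset.card_union_le _ _).trans (add_le_add h h'))

theorem neg (h : EqUpTo n f g) : EqUpTo n (-f) (-g) := by
  rw [EqUpTo, neg_sub_neg]
  exact h.symm

theorem sub (h : EqUpTo m f g) (h' : EqUpTo n f' g') : EqUpTo (m + n) (f - f') (g - g') := by
  simpa only [sub_eq_add_neg] using h.add h'.neg

theorem trans (hfg : EqUpTo m f g) (hgh : EqUpTo n g h) : EqUpTo (m + n) f h := by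
  simpa only [EqUpTo, add_comm g h, add_sub_add_right_eq_sub] using hfg.add hgh

theorem card_support_le (h : EqUpTo n f g) : f.support.card ≤ g.support.card + n := by
  simpa [EqUpTo, add_comm] using h.add (show EqUpTo g.support.card g 0 by simp [EqUpTo])

end EqUpTo

theorem exists_eqUpTo_expSum_sum_smul {G : Type*} [Group G] {d : ℕ} {F : G → ι →₀ M}
    (hF : ∀ g h, EqUpTo d (F (g * h)) (F g + F h)) (w : FreeGroup ℕ) :
    ∃ C, ∀ φ : FreeGroup ℕ →* G,
      EqUpTo C (F (φ w)) ((expSum w).sum fun i n => n • F (φ (.of i))) := by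
  have hF_one : EqUpTo d (F 1) 0 := by simpa [EqUpTo] using hF 1 1
  have hF_inv (g : G) : EqUpTo (d + d) (F g⁻¹) (-F g) := by
    have hadd : EqUpTo d (F g⁻¹ + F g) (F 1) := by simpa using (hF g⁻¹ g).symm
    simpa [EqUpTo] using hadd.trans hF_one
  induction w using FreeGroup.induction_on with
  | C1 => exact ⟨d, fun φ => by simpa [expSum_one] using hF_one⟩
  | of i => exact ⟨0, fun φ => by simpa [expSum_of] using .refl _⟩
  | inv_of i _ =>
    refine ⟨d + d, fun φ => ?_⟩
    rw [expSum_inv, expSum_of, ← Finsupp.single_neg, Finsupp.sum_single_index (by simp)]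
    simpa using hF_inv (φ (.of i))
  | mul v w hv hw =>
    obtain ⟨C, hC⟩ := hv
    obtain ⟨D, hD⟩ := hw
    refine ⟨d + (C + D), fun φ => ?_⟩
    rw [expSum_mul, Finsupp.sum_add_index' (by simp) (by simp [add_smul]), map_mul]
    exact (hF _ _).trans ((hC φ).add (hD φ))

theorem exists_card_support_le_of_mem_verbalSet {G : Type*} [Group G] {d : ℕ} {w : FreeGroup ℕ}
    [Module (ZMod (eWord w)) M] {F : G → ι →₀ M}
    (hF : ∀ g h, EqUpTo d (F (g * h)) (F g + F h)) :
    ∃ C, ∀ g ∈ verbalSet w G, (F g).support.card ≤ C := by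
  obtain ⟨C, hC⟩ := exists_eqUpTo_expSum_sum_smul hF w
  refine ⟨C, ?_⟩
  rintro _ ⟨φ, rfl⟩
  simpa [EqUpTo, expSum_sum_smul_eq_zero] using hC φ

end EqUpTo

section ReducedWords

open FreeGroup

variable {α : Type*} {L M : List (α × Bool)}

theorem isReduced_invRev (hL : IsReduced L) : IsReduced (invRev L) := by
  classical
  rw [isReduced_iff_reduce_eq, reduce_invRev, hL.reduce_eq]

theorem isReduced_of_forall_snd_eq (b : Bool) (h : ∀ a ∈ L, a.2 = b) : IsReduced L :=
  List.Pairwise.isChain <| List.pairwise_of_forall_mem_list fun _ hx _ hy _ =>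
    (h _ hx).trans (h _ hy).symm

theorem exists_cancellation (hL : IsReduced L) (hM : IsReduced M) :
    ∃ A B C, L = A ++ C ∧ M = invRev C ++ B ∧ IsReduced (A ++ B) := by
  induction L using List.reverseRecOn generalizing M with
  | nil => exact ⟨[], M, [], by simp, by simp, by simpa⟩
  | append_singleton L a ih =>
    cases M with
    | nil => exact ⟨L ++ [a], [], [], by simp, by simp, by simpa⟩
    | cons b M =>
      by_cases hab : a.1 = b.1 → a.2 = b.2
      · exact ⟨L ++ [a], b :: M, [], by simp, by simp,
          List.isChain_append.mpr ⟨hL, hM, by simpa using hab⟩⟩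
      · obtain ⟨A, B, C, rfl, rfl, hred⟩ :=
          ih (List.isChain_append.mp hL).1 (List.IsChain.tail hM)
        refine ⟨A, B, C ++ [a], by simp, ?_, hred⟩
        obtain ⟨i, s⟩ := a
        obtain ⟨j, t⟩ := b
        obtain ⟨rfl, rfl⟩ : i = j ∧ t = !s := by cases s <;> cases t <;> simp_all
        simp [invRev]

theorem exists_conj_eq_mk (i : α) {g : FreeGroup α} (hg : g ≠ 1) :
    ∃ c L, c * g * c⁻¹ = mk L ∧ IsReduced L ∧
      L.head?.map Prod.fst = some i ∧ L.getLast?.map Prod.fst = some i := by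
  classical
  obtain ⟨L, rfl, hL⟩ : ∃ L, mk L = g ∧ IsReduced L := ⟨g.toWord, mk_toWord, isReduced_toWord⟩
  have hne : L ≠ [] := by rintro rfl; exact hg rfl
  obtain ⟨a, ha⟩ : ∃ a, L.head? = some a := ⟨_, List.head?_eq_some_head hne⟩
  obtain ⟨b, hb⟩ : ∃ b, L.getLast? = some b := ⟨_, List.getLast?_eq_some_getLast hne⟩
  by_cases hab : a.1 = i ∧ b.1 = i
  · exact ⟨1, L, by simp, hL, by simp [ha, hab], by simp [hb, hab]⟩
  -- Conjugate by `i` or its inverse, with the sign `s` chosen such that nothing cancels.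
  obtain ⟨s, hsa, hsb⟩ : ∃ s : Bool, (i = a.1 → s = a.2) ∧ (b.1 = i → b.2 = !s) := by
    by_cases hai : a.1 = i
    · exact ⟨a.2, fun _ => rfl, fun hbi => absurd ⟨hai, hbi⟩ hab⟩
    · exact ⟨!b.2, fun h => absurd h.symm hai, fun _ => by simp⟩
  refine ⟨mk [(i, s)], (i, s) :: (L ++ [(i, !s)]), by simp [invRev], ?_, by simp, by
    rw [← List.cons_append, List.getLast?_concat, Option.map_some]⟩
  rw [FreeGroup.IsReduced, List.isChain_cons, List.isChain_append,
    List.head?_append_of_ne_nil _ hne]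
  exact ⟨by simpa [ha] using hsa, hL, by simp, by simpa [hb] using hsb⟩

end ReducedWords

section PatternCount

open FreeGroup

variable (K : Type*) [AddCommGroupWithOne K]

/-- The transition function of the automaton which looks for the patterns `x y ^ j x` in a word
in `x = of 0` and `y = of 1`: it is in state `some j` when it has just read `x y ^ j`, and in state
`none` when it has read no such word. -/
def scanStep (s : Option ℕ) (a : Fin 2 × Bool) : Option ℕ :=
  if a = (0, true) then some 0 else if a = (1, true) then s.map (· + 1) else none

/-- The numbers of occurrences of the patterns `x y ^ j x` in a word, as a function of `j` with
values in `K`, where the scan starts in the state `s`. -/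
noncomputable def patternCount : Option ℕ → List (Fin 2 × Bool) → ℕ →₀ K
  | _, [] => 0
  | s, a :: L => (if a = (0, true) then s.elim 0 (Finsupp.single · 1) else 0) +
      patternCount (scanStep s a) L

theorem patternCount_append (s : Option ℕ) (A B : List (Fin 2 × Bool)) :
    patternCount K s (A ++ B) = patternCount K s A + patternCount K (A.foldl scanStep s) B := by
  induction A generalizing s with
  | nil => simp [patternCount]
  | cons a A ih => simp [patternCount, ih, add_assoc]

theorem patternCount_eqUpTo_none (s : Option ℕ) (B : List (Fin 2 × Bool)) :
    EqUpTo 1 (patternCount K s B) (patternCount K none B) := by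
  rw [EqUpTo]
  induction B generalizing s with
  | nil => simp [patternCount]
  | cons a B ih =>
    by_cases hx : a = (0, true)
    · cases s with
      | none => simp
      | some j =>
        simpa [patternCount, scanStep, hx] using
          (Finset.card_le_card Finsupp.support_single_subset).trans (Finset.card_singleton j).le
    · by_cases hy : a = (1, true)
      · simpa [patternCount, scanStep, hy] using ih (s.map (· + 1))
      · simp [patternCount, scanStep, hx, hy]

theorem patternCount_append_eqUpTo (A B : List (Fin 2 × Bool)) :
    EqUpTo 1 (patternCount K none (A ++ B)) (patternCount K none A + patternCount K none B) := by
  rw [patternCount_append]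
  simpa using (EqUpTo.refl (patternCount K none A)).add (patternCount_eqUpTo_none K _ B)

/-- The numbers of occurrences of the patterns `x y ^ j x` minus those of their inverses. -/
noncomputable def signedPatternCount (L : List (Fin 2 × Bool)) : ℕ →₀ K :=
  patternCount K none L - patternCount K none (invRev L)

theorem signedPatternCount_invRev (L : List (Fin 2 × Bool)) :
    signedPatternCount K (invRev L) = -signedPatternCount K L := by
  simp [signedPatternCount]

theorem signedPatternCount_append_eqUpTo (A B : List (Fin 2 × Bool)) :
    EqUpTo 2 (signedPatternCount K (A ++ B)) (signedPatternCount K A + signedPatternCount K B) := by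
  have h := (patternCount_append_eqUpTo K A B).sub
    (patternCount_append_eqUpTo K (invRev B) (invRev A))
  rwa [← invRev_append, add_comm (patternCount K none (invRev B)), add_sub_add_comm] at h

/-- Rhemtulla's map `F₂ → ⨁ⱼ K`, the signed pattern count of the reduced word. -/
noncomputable def patternQuasiHom (g : FreeGroup (Fin 2)) : ℕ →₀ K :=
  signedPatternCount K g.toWord

theorem patternQuasiHom_mk {L : List (Fin 2 × Bool)} (hL : IsReduced L) :
    patternQuasiHom K (mk L) = signedPatternCount K L := by
  rw [patternQuasiHom, toWord_mk, hL.reduce_eq]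

theorem patternQuasiHom_mul_eqUpTo (g h : FreeGroup (Fin 2)) :
    EqUpTo 6 (patternQuasiHom K (g * h)) (patternQuasiHom K g + patternQuasiHom K h) := by
  obtain ⟨A, B, C, hg, hh, hred⟩ :=
    exists_cancellation (isReduced_toWord (x := g)) (isReduced_toWord (x := h))
  have hgh : g * h = mk (A ++ B) := by
    rw [← mk_toWord (x := g), ← mk_toWord (x := h), hg, hh]
    simp only [← mul_mk, ← inv_mk]
    group
  have h_mul := signedPatternCount_append_eqUpTo K A B
  have h_left := signedPatternCount_append_eqUpTo K A C
  have h_right := signedPatternCount_append_eqUpTo K (invRev C) B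
  rw [hgh, patternQuasiHom_mk K hred, patternQuasiHom, patternQuasiHom, hg, hh]
  refine h_mul.trans (n := 4) ?_
  convert! (h_left.add h_right).symm using 1
  rw [signedPatternCount_invRev]
  abel

end PatternCount

section BlockWord

open FreeGroup

/-- The word `x y ^ k₁ x y ^ k₂ ⋯ x y ^ kᵣ x`. -/
def blockWord (ks : List ℕ) : List (Fin 2 × Bool) :=
  (ks.flatMap fun k => (0, true) :: List.replicate k (1, true)) ++ [(0, true)]

theorem blockWord_cons (k : ℕ) (ks : List ℕ) :
    blockWord (k :: ks) = (0, true) :: (List.replicate k (1, true) ++ blockWord ks) := by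
  simp [blockWord]

theorem blockWord_append_cons (js : List ℕ) (k : ℕ) (ks : List ℕ) :
    blockWord (js ++ k :: ks) = blockWord js ++ (List.replicate k (1, true) ++ blockWord ks) := by
  simp [blockWord]

theorem mk_blockWord_append_cons (js : List ℕ) (k : ℕ) (ks : List ℕ) (T : List (Fin 2 × Bool)) :
    mk (blockWord (js ++ k :: ks) ++ T) =
      mk (blockWord js) * mk [(1, true)] ^ k * mk (blockWord ks ++ T) := by
  rw [blockWord_append_cons, pow_mk, List.flatten_replicate_singleton]
  simp only [mul_mk, List.append_assoc]

theorem snd_of_mem_blockWord {ks : List ℕ} {a : Fin 2 × Bool} (h : a ∈ blockWord ks) :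
    a.2 = true := by
  simp only [blockWord, List.mem_append, List.mem_flatMap, List.mem_cons, List.mem_replicate,
    List.not_mem_nil, or_false] at h
  obtain ⟨k, -, rfl | ⟨-, rfl⟩⟩ | rfl := h <;> rfl

theorem isReduced_blockWord_append (ks : List ℕ) {T : List (Fin 2 × Bool)} (hT : IsReduced T)
    (hhead : T.head?.map Prod.fst = some 1) : IsReduced (blockWord ks ++ T) := by
  refine IsReduced.append_overlap
    (isReduced_of_forall_snd_eq true fun _ => snd_of_mem_blockWord) ?_ (by simp)
  refine List.isChain_cons.mpr ⟨fun a ha (hax : 0 = a.1) => ?_, hT⟩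
  have ha : T.head? = some a := ha
  rw [ha, Option.map_some, ← hax] at hhead
  simp at hhead

variable (K : Type*) [AddCommGroupWithOne K]

theorem patternCount_replicate_append (j k : ℕ) (L : List (Fin 2 × Bool)) :
    patternCount K (some j) (List.replicate k (1, true) ++ L) =
      patternCount K (some (j + k)) L := by
  induction k generalizing j with
  | zero => rfl
  | succ k ih =>
    rw [List.replicate_succ, List.cons_append, patternCount]
    simp [scanStep, ih, add_assoc, add_comm 1]

theorem patternCount_some_blockWord (j : ℕ) (ks : List ℕ) :
    patternCount K (some j) (blockWord ks) =
      Finsupp.single j 1 + (ks.map (Finsupp.single · 1)).sum := by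
  induction ks generalizing j with
  | nil => simp [blockWord, patternCount]
  | cons k ks ih =>
    rw [blockWord_cons, patternCount]
    simp [scanStep, patternCount_replicate_append, ih]

theorem patternCount_none_blockWord (ks : List ℕ) :
    patternCount K none (blockWord ks) = (ks.map (Finsupp.single · 1)).sum := by
  cases ks with
  | nil => simp [blockWord, patternCount]
  | cons k ks =>
    rw [blockWord_cons, patternCount]
    simp [scanStep, patternCount_replicate_append, patternCount_some_blockWord]

theorem patternCount_eq_zero {L : List (Fin 2 × Bool)} (h : (0, true) ∉ L) (s : Option ℕ) :
    patternCount K s L = 0 := by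
  induction L generalizing s with
  | nil => rfl
  | cons a L ih =>
    obtain ⟨ha, hL⟩ := not_or.mp (List.mem_cons.not.mp h)
    simp [patternCount, Ne.symm ha, ih hL]

theorem signedPatternCount_blockWord (ks : List ℕ) :
    signedPatternCount K (blockWord ks) = (ks.map (Finsupp.single · 1)).sum := by
  have hneg : (0, true) ∉ invRev (blockWord ks) := by
    intro h
    simp only [invRev, List.mem_reverse, List.mem_map, Prod.mk.injEq] at h
    obtain ⟨a, ha, -, ha'⟩ := h
    simp [snd_of_mem_blockWord ha] at ha'
  rw [signedPatternCount, patternCount_none_blockWord, patternCount_eq_zero K hneg, sub_zero]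

theorem length_le_card_support_patternQuasiHom [NeZero (1 : K)] {ks : List ℕ}
    {T : List (Fin 2 × Bool)} (hks : ks.Nodup)
    (hdisj : ∀ k ∈ ks, k ∉ (signedPatternCount K T).support)
    (hred : IsReduced (blockWord ks ++ T)) :
    ks.length ≤ (patternQuasiHom K (mk (blockWord ks ++ T))).support.card + 2 := by
  have hcount := signedPatternCount_append_eqUpTo K (blockWord ks) T
  rw [← patternQuasiHom_mk K hred, signedPatternCount_blockWord] at hcount
  refine le_trans ?_ hcount.symm.card_support_le
  rw [← List.toFinset_card_of_nodup hks]
  refine Finset.card_le_card fun k hk => ?_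
  have hkT := hdisj k (List.mem_toFinset.mp hk)
  rw [Finsupp.notMem_support_iff] at hkT
  rw [Finsupp.mem_support_iff, Finsupp.add_apply, hkT, add_zero, ← List.sum_toFinset _ hks,
    Finsupp.finsetSum_apply]
  simp [Finsupp.single_apply, List.mem_toFinset.mp hk]

end BlockWord

section FreeGroupRankTwo

open FreeGroup

theorem IsRational.exists_nodup_mk_blockWord_append_mem {R : Set (FreeGroup (Fin 2))}
    (hR : IsRational R) :
    ∃ n, ∀ T, IsReduced T → T.head?.map Prod.fst = some 1 → ∀ r js,
      mk (blockWord (js ++ List.replicate r n) ++ T) ∈ R → ∀ F : Finset ℕ,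
        ∃ ks, ks.length = r ∧ ks.Nodup ∧ (∀ k ∈ ks, k ∉ F) ∧
          mk (blockWord (js ++ ks) ++ T) ∈ R := by
  obtain ⟨n, hn⟩ := hR.hasFiniteResiduals.exists_infinite_setOf_mul_pow_mem
  refine ⟨n, fun T hT hhead r => ?_⟩
  induction r with
  | zero => exact fun js hmem F => ⟨[], rfl, List.nodup_nil, by simp, hmem⟩
  | succ r ih =>
    intro js hmem F
    have hred : IsReduced
        (blockWord js ++ [(1, true)] ++ (blockWord (List.replicate r n) ++ T)) := by
      simpa [blockWord_append_cons] using
        isReduced_blockWord_append (js ++ 1 :: List.replicate r n) hT hhead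
    rw [List.replicate_succ, mk_blockWord_append_cons] at hmem
    obtain ⟨k, hk, hkF⟩ := (hn _ _ _ n .singleton hred le_rfl hmem).exists_notMem_finset F
    rw [Set.mem_ofPred_eq, ← mk_blockWord_append_cons, List.append_cons] at hk
    obtain ⟨ks, hlen, hnodup, hks, hmem_ks⟩ := ih _ hk (insert k F)
    simp only [Finset.mem_insert, not_or] at hks
    refine ⟨k :: ks, by simp [hlen], List.nodup_cons.mpr ⟨fun h => (hks k h).1 rfl, hnodup⟩,
      List.forall_mem_cons.mpr ⟨hkF, fun j hj => (hks j hj).2⟩, ?_⟩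
    rwa [List.append_cons]

theorem IsRational.exists_lt_card_support_patternQuasiHom {R : Set (FreeGroup (Fin 2))}
    (hR : IsRational R) (hconj : ∀ g ∈ R, ∀ c, c * g * c⁻¹ ∈ R) {g : FreeGroup (Fin 2)}
    (hg : g ∈ R) (hg_ne : g ≠ 1) (K : Type*) [AddCommGroupWithOne K] [NeZero (1 : K)] (C : ℕ) :
    ∃ h ∈ R, C < (patternQuasiHom K h).support.card := by
  obtain ⟨n, hpump⟩ := hR.exists_nodup_mk_blockWord_append_mem
  obtain ⟨c, L, hL, hred, hhead, hlast⟩ := exists_conj_eq_mk 1 hg_ne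
  set P := blockWord (List.replicate (C + 3) n)
  have hT_head : (L ++ invRev P).head?.map Prod.fst = some 1 := by
    rwa [List.head?_append_of_ne_nil _ (by rintro rfl; simp at hhead)]
  have hT : IsReduced (L ++ invRev P) := by
    have hPL : IsReduced (P ++ invRev L) :=
      isReduced_blockWord_append _ (isReduced_invRev hred) (by
        simpa [invRev, List.getLast?_map] using hlast)
    simpa using isReduced_invRev hPL
  have hmem : mk (P ++ (L ++ invRev P)) ∈ R := by
    rw [← mul_mk, ← mul_mk, ← inv_mk, ← hL, ← mul_assoc]
    exact hconj _ (hconj g hg c) _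
  obtain ⟨ks, hlen, hnodup, hks, hmem_ks⟩ :=
    hpump _ hT hT_head (C + 3) [] hmem (signedPatternCount K (L ++ invRev P)).support
  refine ⟨_, hmem_ks, ?_⟩
  have := length_le_card_support_patternQuasiHom K hnodup hks
    (isReduced_blockWord_append ks hT hT_head)
  rw [List.nil_append]
  omega

/-- The action of `ℤ` on the free group on generators indexed by `ℤ` which shifts the indices. -/
def shiftFreeGroup : Multiplicative ℤ →* MulAut (FreeGroup ℤ) :=
  zpowersHom _ (freeGroupCongr (Equiv.addRight (1 : ℤ)))

theorem shiftFreeGroup_ofAdd_natCast (n : ℕ) :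
    shiftFreeGroup (Multiplicative.ofAdd 1 ^ n) (of 0) = of (n : ℤ) := by
  induction n with
  | zero => simp
  | succ n ih =>
    rw [pow_succ', _root_.map_mul, MulAut.mul_apply, ih]
    simp [shiftFreeGroup]

theorem exists_injective_freeGroup_nat_hom :
    ∃ φ : FreeGroup ℕ →* FreeGroup (Fin 2), Function.Injective φ := by
  -- The conjugates `yⁿ x y⁻ⁿ` are free generators, as one sees in a semidirect product in which
  -- conjugation by `y` shifts the generators of a free group.
  let φ : FreeGroup ℕ →* FreeGroup (Fin 2) := lift fun n => of 1 ^ n * of 0 * (of 1 ^ n)⁻¹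
  let ψ : FreeGroup (Fin 2) →* FreeGroup ℤ ⋊[shiftFreeGroup] Multiplicative ℤ :=
    lift ![SemidirectProduct.inl (of 0), SemidirectProduct.inr (Multiplicative.ofAdd 1)]
  have hcomp : ψ.comp φ = SemidirectProduct.inl.comp (map (Nat.cast : ℕ → ℤ)) := by
    ext1 n
    simp only [MonoidHom.comp_apply, map.of, ← shiftFreeGroup_ofAdd_natCast,
      SemidirectProduct.inl_aut]
    simp [φ, ψ]
  have hinj : Function.Injective (ψ.comp φ) := by
    rw [hcomp, MonoidHom.coe_comp]
    exact SemidirectProduct.inl_injective.comp (map_injective Nat.cast_injective)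
  exact ⟨φ, .of_comp hinj⟩

theorem exists_mem_verbalSet_ne_one {w : FreeGroup ℕ} (hw : w ≠ 1) :
    ∃ g ∈ verbalSet w (FreeGroup (Fin 2)), g ≠ 1 := by
  obtain ⟨φ, hφ⟩ := exists_injective_freeGroup_nat_hom
  exact ⟨φ w, ⟨φ, rfl⟩, (map_ne_one_iff φ hφ).mpr hw⟩

theorem IsProperWord.not_isRational_verbalSet_freeGroup {w : FreeGroup ℕ} (hw : IsProperWord w) :
    ¬ IsRational (verbalSet w (FreeGroup (Fin 2))) := by
  intro hR
  have : Nontrivial (ZMod (eWord w)) := ZMod.nontrivial_iff.mpr hw.eWord_ne_one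
  obtain ⟨C, hC⟩ := exists_card_support_le_of_mem_verbalSet (w := w)
    (patternQuasiHom_mul_eqUpTo (ZMod (eWord w)))
  obtain ⟨g, hg, hg_ne⟩ := exists_mem_verbalSet_ne_one hw.ne_one
  obtain ⟨h, hh, hlt⟩ := hR.exists_lt_card_support_patternQuasiHom
    (fun _ => conj_mem_verbalSet) hg hg_ne (ZMod (eWord w)) C
  exact (hC h hh).not_gt hlt

theorem IsProperWord.not_isRational_verbalSet_of_surjective {G : Type*} [Group G]
    {w : FreeGroup ℕ} (hw : IsProperWord w) (φ : G →* FreeGroup (Fin 2))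
    (hφ : Function.Surjective φ) : ¬ IsRational (verbalSet w G) := by
  intro hR
  have hR_image := hR.image φ
  rw [image_verbalSet φ hφ] at hR_image
  exact hw.not_isRational_verbalSet_freeGroup hR_image

end FreeGroupRankTwo

namespace RAAG

variable {V : Type*} {Γ : SimpleGraph V} {G : Type*} [Group G]

/-- The generator of `G(Γ)` given by a vertex. -/
def of (v : V) : RAAG Γ :=
  PresentedGroup.of v

theorem commute_of_of_adj {u v : V} (h : Γ.Adj u v) : Commute (of u : RAAG Γ) (of v) := by
  rw [← commutatorElement_eq_one_iff_commute, commutatorElement_def]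
  exact PresentedGroup.one_of_mem (rels := raagRels Γ) ⟨u, v, h, rfl⟩

/-- The universal property of `G(Γ)`: the homomorphism given by elements which commute whenever
their indices are adjacent in `Γ`. -/
def lift (f : V → G) (hf : ∀ u v, Γ.Adj u v → Commute (f u) (f v)) : RAAG Γ →* G :=
  PresentedGroup.toGroup (f := f) (rels := raagRels Γ) (by
    rintro _ ⟨u, v, huv, rfl⟩
    simpa only [map_mul, map_inv, FreeGroup.lift_apply_of, commutatorElement_def] using
      commutatorElement_eq_one_iff_commute.mpr (hf u v huv))

theorem lift_of {f : V → G} (hf : ∀ u v, Γ.Adj u v → Commute (f u) (f v)) (v : V) :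
    lift f hf (of v) = f v :=
  PresentedGroup.toGroup.of _

theorem mem_of_forall_of_mem {H : Subgroup (RAAG Γ)} (hH : ∀ v, of v ∈ H) (g : RAAG Γ) : g ∈ H :=
  PresentedGroup.generated_by _ H hH g

theorem commute_of_forall_adj (h : ∀ u v, u ≠ v → Γ.Adj u v) (a b : RAAG Γ) : Commute a b := by
  have hgen (u v : V) : Commute (of u : RAAG Γ) (of v) := by
    rcases eq_or_ne u v with rfl | huv
    · exact .refl _
    · exact commute_of_of_adj (h u v huv)
  have hright (u : V) (b : RAAG Γ) : Commute (of u) b :=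
    (Subgroup.mem_centralizer_singleton_iff.mp <|
      mem_of_forall_of_mem (H := .centralizer {of u})
        (fun v => Subgroup.mem_centralizer_singleton_iff.mpr (hgen u v).symm) b).symm
  exact Subgroup.mem_centralizer_singleton_iff.mp <|
    mem_of_forall_of_mem (H := .centralizer {b})
      (fun v => Subgroup.mem_centralizer_singleton_iff.mpr (hright v b)) a

theorem exists_surjective_of_not_adj {u v : V} (huv : u ≠ v) (hadj : ¬ Γ.Adj u v) :
    ∃ φ : RAAG Γ →* FreeGroup (Fin 2), Function.Surjective φ := by
  classical
  let f (z : V) : FreeGroup (Fin 2) := if z = u then .of 0 else if z = v then .of 1 else 1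
  have hf (a b : V) (hab : Γ.Adj a b) : Commute (f a) (f b) := by
    have hba := hab.symm
    simp only [f]
    split_ifs <;> simp_all
  refine ⟨lift f hf, ?_⟩
  rw [← MonoidHom.range_eq_top, ← top_le_iff, ← FreeGroup.closure_range_of, Subgroup.closure_le]
  rintro _ ⟨i, rfl⟩
  fin_cases i
  · exact ⟨of u, by simp [lift_of, f]⟩
  · exact ⟨of v, by simp [lift_of, f, huv.symm]⟩

end RAAG

theorem stmt_18_general {V : Type*} (Γ : SimpleGraph V)
    (hna : ∃ a b : RAAG Γ, a * b ≠ b * a) :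
    (∃ φ : RAAG Γ →* FreeGroup (Fin 2), Function.Surjective φ) ∧
      ∀ w : FreeGroup ℕ, IsProperWord w → ¬ IsRational (verbalSet w (RAAG Γ)) := by
  obtain ⟨a, b, hab⟩ := hna
  obtain ⟨u, v, huv, hadj⟩ : ∃ u v, u ≠ v ∧ ¬ Γ.Adj u v := by
    by_contra! hcomplete
    exact hab (RAAG.commute_of_forall_adj hcomplete a b)
  obtain ⟨φ, hφ⟩ := RAAG.exists_surjective_of_not_adj huv hadj
  exact ⟨⟨φ, hφ⟩, fun w hw => hw.not_isRational_verbalSet_of_surjective φ hφ⟩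

/-- A non-abelian right angled Artin group surjects onto `F₂`; consequently none of
its proper verbal sets is rational. -/
theorem stmt_18 {V : Type*} [Fintype V] (Γ : SimpleGraph V)
    (hna : ∃ a b : RAAG Γ, a * b ≠ b * a) :
    (∃ φ : RAAG Γ →* FreeGroup (Fin 2), Function.Surjective φ) ∧
      ∀ w : FreeGroup ℕ, IsProperWord w → ¬ IsRational (verbalSet w (RAAG Γ)) :=
  stmt_18_general Γ hna
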